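/- arXiv:2407.15536 — 2 statements merged into one kernel-verified Lean document; each statement's English description precedes it below -/
import Mathlib

section
/- Let u, κ, ρ, σ, τ be real numbers with σ ≠ 0 and write i for the imaginary unit. Suppose d : ℝ → ℂ is differentiable at σ, satisfies d(s)² = (κ − iρsu)² + s²(iu + u²) for all s in a neighborhood of σ, with d(σ) ≠ 0 and κ − iρσu + d(σ) ≠ 0. Define g(s) = (κ − iρsu − d(s))/(κ − iρsu + d(s)), a(s) = exp(−τ d(s)), and D(s) = ((κ − iρsu − d(s))/s²)·(1 − a(s))/(1 − g(s)a(s)), and assume 1 − g(σ)a(σ) ≠ 0. Then D is differentiable at σ and, evaluating d, g, a at σ, its derivative at σ equals −(iu + u²)/(σ d (1 − g a)² (κ − iρσu + d)) · [ (1 − a)(κ a g + κ − d + d a g) − τ σ a (1 − g)(iρu(κ − iρσu) − σ(iu + u²)) ]. -/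
open Complex

/-!
Write `b = κ - iρsu` and `w = iu + u²`, so that `d² = b² + s²w`. Rationalising with
`(b - d)(b + d) = -s²w` removes the factor `s⁻²`:

  `D = -w (1 - a) / M`,  where `M = (b + d) - (b - d) a = (b + d) (1 - g a)`.

The quotient rule gives `D' = -w (-2 d a' - (1 - a) (b' (1 - a) + d' (1 + a))) / M²`. A continuous
branch `d` of the square root is differentiable where it does not vanish, with `d d' = b b' + s w`.
Since `b` is affine with `b(0) = κ`, we get `s b' = b - κ` and `s d d' = d² - κ b`, hence

  `s d (b' (1 - a) + d' (1 + a)) = (b + d) (d - κ) - (b - d) (d + κ) a`.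

One factor `b + d` then cancels by `b - d = g (b + d)` and `2 d = (1 - g) (b + d)`.
-/

section Derivatives

open Topology

variable {𝕜 𝕂 : Type*} [NontriviallyNormedField 𝕜] [NontriviallyNormedField 𝕂] [NormedAlgebra 𝕜 𝕂]
  {x : 𝕜}

theorem hasDerivAt_of_sq_eventuallyEq [NeZero (2 : 𝕂)] {f F : 𝕜 → 𝕂} {F' : 𝕂}
    (hf : ContinuousAt f x) (hF : HasDerivAt F F' x) (hsq : ∀ᶠ y in 𝓝 x, f y ^ 2 = F y)
    (hfx : f x ≠ 0) : HasDerivAt f (F' / (2 * f x)) x := by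
  have two_mul_ne : 2 * f x ≠ 0 := mul_ne_zero two_ne_zero hfx
  have tendsto_sum : Filter.Tendsto (fun y => f y + f x) (𝓝 x) (𝓝 (2 * f x)) := by
    simpa only [two_mul] using hf.tendsto.add_const (f x)
  rw [hasDerivAt_iff_tendsto_slope] at hF ⊢
  refine (hF.div (tendsto_sum.mono_left nhdsWithin_le_nhds) two_mul_ne).congr' ?_
  filter_upwards [nhdsWithin_le_nhds hsq,
    nhdsWithin_le_nhds (tendsto_sum.eventually_ne two_mul_ne)] with y hy sum_ne
  have factor : F y - F x = (f y - f x) * (f y + f x) := by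
    rw [← hy, ← hsq.self_of_nhds]
    ring
  rw [Pi.div_apply, slope_def_module, slope_def_module, factor, ← smul_mul_assoc,
    mul_div_cancel_right₀ _ sum_ne]

theorem hasDerivAt_algebraMap (x : 𝕜) : HasDerivAt (algebraMap 𝕜 𝕂) 1 x :=
  (algebraMapCLM 𝕜 𝕂).hasDerivAt.congr_deriv (map_one (algebraMap 𝕜 𝕂))

theorem hasDerivAt_of_sq_eq_sq_add_sq_mul [NeZero (2 : 𝕂)] {b d : 𝕜 → 𝕂} {b' w : 𝕂}
    (hb : HasDerivAt b b' x) (hd : ContinuousAt d x)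
    (hsq : ∀ᶠ s in 𝓝 x, d s ^ 2 = b s ^ 2 + algebraMap 𝕜 𝕂 s ^ 2 * w) (hdx : d x ≠ 0) :
    HasDerivAt d ((b x * b' + algebraMap 𝕜 𝕂 x * w) / d x) x := by
  have hF := (hb.pow 2).add (((hasDerivAt_algebraMap x).pow 2).mul_const w)
  refine (hasDerivAt_of_sq_eventuallyEq hd hF hsq hdx).congr_deriv ?_
  have two_ne : (2 : 𝕂) ≠ 0 := two_ne_zero
  field_simp
  ring

theorem hasDerivAt_one_sub_div_add_sub_sub_mul {a b d : 𝕜 → 𝕂} {a' b' d' : 𝕂}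
    (ha : HasDerivAt a a' x) (hb : HasDerivAt b b' x) (hd : HasDerivAt d d' x)
    (hM : b x + d x - (b x - d x) * a x ≠ 0) :
    HasDerivAt (fun s => (1 - a s) / (b s + d s - (b s - d s) * a s))
      ((-(2 * d x * a') - (1 - a x) * (b' * (1 - a x) + d' * (1 + a x))) /
        (b x + d x - (b x - d x) * a x) ^ 2) x := by
  refine ((ha.const_sub 1).div ((hb.add hd).sub ((hb.sub hd).mul ha)) hM).congr_deriv ?_
  simp only [Pi.add_apply, Pi.sub_apply, Pi.mul_apply]
  ring

end Derivatives

section Algebra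

variable {K : Type*} [Field K] {a b d d' g κ r s t w : K}

theorem add_mul_one_sub_mul (hg : g * (b + d) = b - d) :
    (b + d) * (1 - g * a) = b + d - (b - d) * a := by
  linear_combination -a * hg

theorem heston_D_eq_neg_mul_div (hs : s ≠ 0) (hbd : b + d ≠ 0)
    (hsq : d ^ 2 = b ^ 2 + s ^ 2 * w) (hg : g * (b + d) = b - d) :
    (b - d) / s ^ 2 * ((1 - a) / (1 - g * a)) = -w * ((1 - a) / (b + d - (b - d) * a)) := by
  have rationalise : (b - d) / s ^ 2 = -w / (b + d) := by
    rw [div_eq_div_iff (pow_ne_zero 2 hs) hbd]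
    linear_combination -hsq
  rw [rationalise, ← add_mul_one_sub_mul hg, div_mul_div_comm, mul_div_assoc]

-- `-r (1 - a) + d' (1 + a)` is the derivative of `(b + d) - (b - d) a` with `a` held constant.
theorem heston_partial_deriv_denominator_eq (hsq : d ^ 2 = b ^ 2 + s ^ 2 * w) (hκ : κ = b + s * r)
    (hdd' : d * d' = s * w - r * b) (hg : g * (b + d) = b - d) :
    s * d * (-r * (1 - a) + d' * (1 + a)) =
      -((b + d) * (κ * a * g + κ - d + d * a * g)) := by
  have s_mul_d_mul_d' : s * (d * d') = d ^ 2 - κ * b := by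
    rw [hdd', hκ]
    linear_combination -hsq
  calc s * d * (-r * (1 - a) + d' * (1 + a))
      = d * (b - κ) * (1 - a) + (d ^ 2 - κ * b) * (1 + a) := by
        rw [← s_mul_d_mul_d', hκ]
        ring
    _ = (b + d) * (d - κ) - (b - d) * (d + κ) * a := by ring
    _ = -((b + d) * (κ * a * g + κ - d + d * a * g)) := by
        rw [← hg]
        ring

theorem heston_quotient_deriv_eq (hs : s ≠ 0) (hd : d ≠ 0) (hbd : b + d ≠ 0)
    (hga : 1 - g * a ≠ 0) (hsq : d ^ 2 = b ^ 2 + s ^ 2 * w) (hκ : κ = b + s * r)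
    (hdd' : d * d' = s * w - r * b) (hg : g * (b + d) = b - d) :
    -w * ((-(2 * d * (a * -(t * d'))) - (1 - a) * (-r * (1 - a) + d' * (1 + a))) /
        (b + d - (b - d) * a) ^ 2) =
      -w / (s * d * (1 - g * a) ^ 2 * (b + d)) *
        ((1 - a) * (κ * a * g + κ - d + d * a * g) -
          t * s * a * (1 - g) * (r * b - s * w)) := by
  have two_mul_d : 2 * d = (b + d) * (1 - g) := by linear_combination hg
  have numerator : s * d *
      (-(2 * d * (a * -(t * d'))) - (1 - a) * (-r * (1 - a) + d' * (1 + a))) =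
      (b + d) * ((1 - a) * (κ * a * g + κ - d + d * a * g) -
        t * s * a * (1 - g) * (r * b - s * w)) := by
    linear_combination (t * s * a * d * d') * two_mul_d +
      (b + d) * (1 - g) * t * s * a * hdd' -
      (1 - a) * heston_partial_deriv_denominator_eq (a := a) hsq hκ hdd' hg
  rw [← add_mul_one_sub_mul hg, div_mul_eq_mul_div, ← mul_div_assoc,
    div_eq_div_iff (by positivity) (by positivity)]
  linear_combination -w * (b + d) * (1 - g * a) ^ 2 * numerator

end Algebra

theorem heston_deriv_D_sigma_general {𝕜 : Type*} [NontriviallyNormedField 𝕜] [NormedAlgebra 𝕜 ℂ]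
    (u κ ρ τ : ℂ) {σ : 𝕜} (hσ : σ ≠ 0) {d g a D : 𝕜 → ℂ}
    (hcont : ContinuousAt d σ)
    (hsq : ∀ᶠ s in nhds σ, d s ^ 2 =
      (κ - I * ρ * algebraMap 𝕜 ℂ s * u) ^ 2 + algebraMap 𝕜 ℂ s ^ 2 * (I * u + u ^ 2))
    (hne : d σ ≠ 0)
    (hne2 : κ - I * ρ * algebraMap 𝕜 ℂ σ * u + d σ ≠ 0)
    (hg : ∀ s, g s = (κ - I * ρ * algebraMap 𝕜 ℂ s * u - d s) /
      (κ - I * ρ * algebraMap 𝕜 ℂ s * u + d s))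
    (ha : ∀ s, a s = Complex.exp (-(τ * d s)))
    (hD : ∀ s, D s = ((κ - I * ρ * algebraMap 𝕜 ℂ s * u - d s) / algebraMap 𝕜 ℂ s ^ 2) *
      ((1 - a s) / (1 - g s * a s)))
    (hne3 : 1 - g σ * a σ ≠ 0) :
    HasDerivAt D
      (-(I * u + u ^ 2) / (algebraMap 𝕜 ℂ σ * d σ * (1 - g σ * a σ) ^ 2 *
          (κ - I * ρ * algebraMap 𝕜 ℂ σ * u + d σ)) *
        ((1 - a σ) * (κ * a σ * g σ + κ - d σ + d σ * a σ * g σ) -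
          τ * algebraMap 𝕜 ℂ σ * a σ * (1 - g σ) *
            (I * ρ * u * (κ - I * ρ * algebraMap 𝕜 ℂ σ * u) -
              algebraMap 𝕜 ℂ σ * (I * u + u ^ 2)))) σ := by
  let b : 𝕜 → ℂ := fun s => κ - I * ρ * algebraMap 𝕜 ℂ s * u
  have algebraMap_ne {s : 𝕜} (hs : s ≠ 0) : algebraMap 𝕜 ℂ s ≠ 0 := by simpa using hs
  have g_mul {s : 𝕜} (hs : b s + d s ≠ 0) : g s * (b s + d s) = b s - d s := by
    rw [hg, div_mul_cancel₀ _ hs]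
  have hb : HasDerivAt b (-(I * ρ * u)) σ := by
    simpa using (((hasDerivAt_algebraMap σ).const_mul (I * ρ)).mul_const u).const_sub κ
  have hd := hasDerivAt_of_sq_eq_sq_add_sq_mul hb hcont hsq hne
  have ha' := (hd.const_mul τ).fun_neg.cexp
  simp only [← ha] at ha'
  have D_eq : D =ᶠ[nhds σ] fun s =>
      -(I * u + u ^ 2) * ((1 - a s) / (b s + d s - (b s - d s) * a s)) := by
    filter_upwards [hsq, (hb.continuousAt.add hcont).eventually_ne hne2,
      eventually_ne_nhds hσ] with s hsq_s hbd_s hs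
    rw [hD, ← heston_D_eq_neg_mul_div (algebraMap_ne hs) hbd_s hsq_s (g_mul hbd_s)]
  have hM : b σ + d σ - (b σ - d σ) * a σ ≠ 0 :=
    add_mul_one_sub_mul (g_mul hne2) ▸ mul_ne_zero hne2 hne3
  refine (((hasDerivAt_one_sub_div_add_sub_sub_mul ha' hb hd hM).const_mul _).congr_of_eventuallyEq
    D_eq).congr_deriv ?_
  exact heston_quotient_deriv_eq (algebraMap_ne hσ) hne hne2 hne3 hsq.self_of_nhds (by ring)
    (by rw [mul_div_cancel₀ _ hne]; ring) (g_mul hne2)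

theorem heston_deriv_D_sigma (u κ ρ σ τ : ℝ) (hσ : σ ≠ 0) (d g a D : ℝ → ℂ)
    (hdiff : DifferentiableAt ℝ d σ)
    (hsq : ∀ᶠ s in nhds σ,
      d s ^ 2 = ((κ : ℂ) - I * ρ * s * u) ^ 2 + s ^ 2 * (I * u + u ^ 2))
    (hne : d σ ≠ 0)
    (hne2 : (κ : ℂ) - I * ρ * σ * u + d σ ≠ 0)
    (hg : ∀ s : ℝ, g s = ((κ : ℂ) - I * ρ * s * u - d s) / ((κ : ℂ) - I * ρ * s * u + d s))
    (ha : ∀ s : ℝ, a s = Complex.exp (-(τ * d s)))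
    (hD : ∀ s : ℝ, D s = (((κ : ℂ) - I * ρ * s * u - d s) / (s : ℂ) ^ 2) *
      ((1 - a s) / (1 - g s * a s)))
    (hne3 : 1 - g σ * a σ ≠ 0) :
    HasDerivAt D
      (-(I * u + u ^ 2) /
          ((σ : ℂ) * d σ * (1 - g σ * a σ) ^ 2 * ((κ : ℂ) - I * ρ * σ * u + d σ)) *
        ((1 - a σ) * (κ * a σ * g σ + κ - d σ + d σ * a σ * g σ) -
          τ * σ * a σ * (1 - g σ) *
            (I * ρ * u * ((κ : ℂ) - I * ρ * σ * u) - σ * (I * u + u ^ 2)))) σ :=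
  heston_deriv_D_sigma_general u κ ρ τ hσ hdiff.continuousAt hsq hne hne2 hg ha hD hne3
end

section
/- Let u, ρ, σ, κ, τ be real numbers and write i for the imaginary unit. Suppose d : ℝ → ℂ is differentiable at κ, satisfies d(x)² = (x − iρσu)² + σ²(iu + u²) for all x in a neighborhood of κ, with d(κ) ≠ 0 and κ − iρσu + d(κ) ≠ 0. Define g(x) = (x − iρσu − d(x))/(x − iρσu + d(x)), a(x) = exp(−τ d(x)), N(x) = (1 − a(x)g(x))/(1 − g(x)), and assume 1 − g(κ) ≠ 0 and 1 − g(κ)a(κ) ≠ 0. Let L : ℝ → ℂ be differentiable at κ with exp(L(x)) = N(x) for all x in a neighborhood of κ, and define M(x) = (x − iρσu − d(x))τ − 2L(x). Then M is differentiable at κ and, writing c = κ − iρσu and evaluating d, g, a at κ, its derivative at κ equals (c − d)·(2(1 − a) − τ d (1 − a g) − τ a (1 − g) c) / (d² (1 − a g)). -/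
open Complex

/-!
The argument works for any differentiable `c` in place of `κ - iρσu`. Since `d² - c²` is constant,
`d' = c' c / d`, so `c + d` and `c - d` have logarithmic derivatives `c' / d` and `-c' / d`, and
hence `g' = -2 c' g / d`. Any continuous logarithm of `N = (1 - a g) / (1 - g)` has the logarithmic
derivative of `N` as its derivative, and `1 - g = 2 d / (c + d)` clears the second denominator.
-/

open scoped Topology

section Lift

variable {𝕜 𝕜' : Type*} [NontriviallyNormedField 𝕜] [NontriviallyNormedField 𝕜']
  [NormedAlgebra 𝕜 𝕜'] {x : 𝕜}

theorem hasDerivAt_of_comp_eventuallyEq {f : 𝕜' → 𝕜'} {f' : 𝕜'} {g h : 𝕜 → 𝕜'} {h' : 𝕜'}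
    (hg : ContinuousAt g x) (hf : HasDerivAt f f' (g x)) (hf' : f' ≠ 0) (hh : HasDerivAt h h' x)
    (hfg : ∀ᶠ y in 𝓝 x, f (g y) = h y) : HasDerivAt g (h' / f') x := by
  have dslope_tendsto : Filter.Tendsto (fun y => dslope f (g x) (g y)) (𝓝 x) (𝓝 f') := by
    have := (continuousAt_dslope_same.2 hf.differentiableAt).tendsto.comp hg.tendsto
    rwa [dslope_same, hf.deriv] at this
  rw [hasDerivAt_iff_tendsto_slope] at hh ⊢
  refine (hh.div (dslope_tendsto.mono_left nhdsWithin_le_nhds) hf').congr' ?_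
  filter_upwards [hfg.filter_mono nhdsWithin_le_nhds,
    (dslope_tendsto.eventually_ne hf').filter_mono nhdsWithin_le_nhds] with y hy dslope_ne
  have sub_eq : h y - h x = (g y - g x) * dslope f (g x) (g y) := by
    rw [← hy, ← hfg.self_of_nhds, ← sub_smul_dslope, smul_eq_mul]
  simp only [Pi.div_apply, slope_def_module, sub_eq]
  rw [← smul_mul_assoc, mul_div_cancel_right₀ _ dslope_ne]

theorem hasDerivAt_of_sq_eventuallyEq_sq_add_const [NeZero (2 : 𝕜')] {c d : 𝕜 → 𝕜'} {c' w : 𝕜'}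
    (hd : ContinuousAt d x) (hc : HasDerivAt c c' x) (hne : d x ≠ 0)
    (hsq : ∀ᶠ y in 𝓝 x, d y ^ 2 = c y ^ 2 + w) : HasDerivAt d (c' * (c x / d x)) x := by
  have two_ne : (2 : 𝕜') ≠ 0 := two_ne_zero
  have sq_deriv : HasDerivAt (fun z : 𝕜' => z ^ 2) (2 * d x) (d x) := by
    simpa using hasDerivAt_pow 2 (d x)
  have sq_add_deriv : HasDerivAt (fun y => c y ^ 2 + w) (2 * c x * c') x := by
    simpa using (hc.fun_pow 2).add_const w
  refine (hasDerivAt_of_comp_eventuallyEq hd sq_deriv (mul_ne_zero two_ne hne)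
    sq_add_deriv hsq).congr_deriv ?_
  field_simp

theorem hasDerivAt_sub_div_add {c d : 𝕜 → 𝕜'} {c' : 𝕜'} (hc : HasDerivAt c c' x)
    (hd : HasDerivAt d (c' * (c x / d x)) x) (hne : d x ≠ 0) (hadd : c x + d x ≠ 0) :
    HasDerivAt (fun y => (c y - d y) / (c y + d y))
      (-(2 * c' * ((c x - d x) / (c x + d x)) / d x)) x := by
  refine ((hc.fun_sub hd).fun_div (hc.fun_add hd) hadd).congr_deriv ?_
  field_simp
  ring

end Lift

section Heston

variable {𝕜 : Type*} [NontriviallyNormedField 𝕜] [NormedAlgebra 𝕜 ℂ] {x : 𝕜}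

theorem hasDerivAt_of_cexp_eventuallyEq_div {L P Q : 𝕜 → ℂ} {P' Q' : ℂ} (hL : ContinuousAt L x)
    (hP : HasDerivAt P P' x) (hQ : HasDerivAt Q Q' x)
    (hexp : ∀ᶠ y in 𝓝 x, exp (L y) = P y / Q y) :
    HasDerivAt L (P' / P x - Q' / Q x) x := by
  have exp_eq : exp (L x) = P x / Q x := hexp.self_of_nhds
  obtain ⟨hP0, hQ0⟩ : P x ≠ 0 ∧ Q x ≠ 0 := div_ne_zero_iff.1 (exp_eq ▸ exp_ne_zero (L x))
  refine (hasDerivAt_of_comp_eventuallyEq hL (hasDerivAt_exp (L x)) (exp_ne_zero _)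
    (hP.fun_div hQ hQ0) hexp).congr_deriv ?_
  rw [exp_eq]
  field_simp

theorem heston_hasDerivAt_log {c d g a L : 𝕜 → ℂ} {c' τ : ℂ} (hc : HasDerivAt c c' x)
    (hd : HasDerivAt d (c' * (c x / d x)) x) (hne : d x ≠ 0) (hadd : c x + d x ≠ 0)
    (hg : ∀ y, g y = (c y - d y) / (c y + d y)) (ha : ∀ y, a y = exp (-(τ * d y)))
    (hL : ContinuousAt L x) (hexp : ∀ᶠ y in 𝓝 x, exp (L y) = (1 - a y * g y) / (1 - g y)) :
    HasDerivAt L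
      (c' * (a x * g x * (τ * c x + 2) / (d x * (1 - a x * g x)) - (c x - d x) / d x ^ 2)) x := by
  have hg' : HasDerivAt g (-(2 * c' * g x / d x)) x := by
    simpa only [← hg] using hasDerivAt_sub_div_add hc hd hne hadd
  have ha' : HasDerivAt a (a x * -(τ * (c' * (c x / d x)))) x := by
    simpa only [← ha] using (hd.const_mul τ).fun_neg.cexp
  have one_sub_g : 1 - g x = 2 * d x / (c x + d x) := by
    rw [hg]
    field_simp
    ring
  have g_div_one_sub : 2 * g x / (1 - g x) = (c x - d x) / d x := by
    rw [one_sub_g, hg]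
    field_simp
  refine (hasDerivAt_of_cexp_eventuallyEq_div hL ((ha'.fun_mul hg').const_sub 1)
    (hg'.const_sub 1) hexp).congr_deriv ?_
  calc
    _ = c' * (a x * g x * (τ * c x + 2) / (d x * (1 - a x * g x))
          - 2 * g x / (1 - g x) / d x) := by
      rw [mul_sub]
      congr 1 <;> field_simp
      ring
    _ = _ := by rw [g_div_one_sub, div_div, ← sq]

theorem heston_deriv_M_kappa_general {c d g a N L M : 𝕜 → ℂ} {c' w τ : ℂ}
    (hc : HasDerivAt c c' x) (hd : ContinuousAt d x)
    (hsq : ∀ᶠ y in 𝓝 x, d y ^ 2 = c y ^ 2 + w) (hne : d x ≠ 0) (hadd : c x + d x ≠ 0)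
    (hg : ∀ y, g y = (c y - d y) / (c y + d y)) (ha : ∀ y, a y = exp (-(τ * d y)))
    (hN : ∀ y, N y = (1 - a y * g y) / (1 - g y)) (hL : ContinuousAt L x)
    (hexp : ∀ᶠ y in 𝓝 x, exp (L y) = N y) (hM : ∀ y, M y = (c y - d y) * τ - 2 * L y) :
    HasDerivAt M
      (c' * ((c x - d x) *
        (2 * (1 - a x) - τ * d x * (1 - a x * g x) - τ * a x * (1 - g x) * c x) /
          (d x ^ 2 * (1 - a x * g x)))) x := by
  have hag : 1 - a x * g x ≠ 0 :=
    (div_ne_zero_iff.1 (hN x ▸ hexp.self_of_nhds ▸ exp_ne_zero (L x))).1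
  have hd' : HasDerivAt d (c' * (c x / d x)) x :=
    hasDerivAt_of_sq_eventuallyEq_sq_add_const hd hc hne hsq
  have hL' := heston_hasDerivAt_log hc hd' hne hadd hg ha hL (by simpa only [hN] using hexp)
  rw [funext hM]
  refine (((hc.fun_sub hd').mul_const τ).fun_sub (hL'.const_mul 2)).congr_deriv ?_
  have g_mul_add : g x * (c x + d x) = c x - d x := by
    rw [hg, div_mul_cancel₀ _ hadd]
  field_simp
  linear_combination -(c' * a x * (τ * c x + 2)) * g_mul_add

end Heston

theorem heston_deriv_M_kappa (u ρ σ κ τ : ℝ) (d g a N L M : ℝ → ℂ)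
    (hdiff : DifferentiableAt ℝ d κ)
    (hsq : ∀ᶠ x in nhds κ,
      d x ^ 2 = ((x : ℂ) - I * ρ * σ * u) ^ 2 + σ ^ 2 * (I * u + u ^ 2))
    (hne : d κ ≠ 0)
    (hne2 : (κ : ℂ) - I * ρ * σ * u + d κ ≠ 0)
    (hg : ∀ x : ℝ, g x = ((x : ℂ) - I * ρ * σ * u - d x) / ((x : ℂ) - I * ρ * σ * u + d x))
    (ha : ∀ x : ℝ, a x = Complex.exp (-(τ * d x)))
    (hN : ∀ x : ℝ, N x = (1 - a x * g x) / (1 - g x))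
    (hne3 : 1 - g κ ≠ 0)
    (hne4 : 1 - g κ * a κ ≠ 0)
    (hLdiff : DifferentiableAt ℝ L κ)
    (hLexp : ∀ᶠ x in nhds κ, Complex.exp (L x) = N x)
    (hM : ∀ x : ℝ, M x = ((x : ℂ) - I * ρ * σ * u - d x) * τ - 2 * L x) :
    HasDerivAt M
      ((((κ : ℂ) - I * ρ * σ * u) - d κ) *
          (2 * (1 - a κ) - τ * d κ * (1 - a κ * g κ) -
            τ * a κ * (1 - g κ) * ((κ : ℂ) - I * ρ * σ * u)) /
        (d κ ^ 2 * (1 - a κ * g κ))) κ := by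
  have hc : HasDerivAt (fun x : ℝ => (x : ℂ) - I * ρ * σ * u) 1 κ := by
    simpa using (hasDerivAt_id κ).ofReal_comp.sub_const (I * ρ * σ * u)
  simpa only [one_mul] using heston_deriv_M_kappa_general hc hdiff.continuousAt hsq hne hne2 hg ha
    hN hLdiff.continuousAt hLexp hM
end
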